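/- arXiv:2402.01426 — 8 statements merged into one kernel-verified Lean document; each statement's English description precedes it below -/
import Mathlib

section
/- For all real constants a > 0, b > 0, c > 0, the function x ↦ log₂(1 + a/(b + c·x)) (i.e., Real.logb 2 applied to 1 + a/(b + c·x)) is convex on the interval [0, ∞). -/
/-!
For `a ≥ 0` the function `t ↦ log (1 + a / t)` has derivative `-(a / (t * (t + a)))` on `(0, ∞)`.
This is nonpositive and increasing in `t`, so the function is antitone and convex there, and both
properties together make its composition with any positive concave function convex.
-/

open Set Real

/-- In `ConvexOn.comp_concaveOn` the set `t` is `f '' s`, which need not be convex even for `f`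
concave and real-valued. -/
theorem convexOn_comp_of_antitoneOn_of_mapsTo {𝕜 E α β : Type*} [Semiring 𝕜] [PartialOrder 𝕜]
    [AddCommMonoid E] [AddCommMonoid α] [PartialOrder α] [AddCommMonoid β] [PartialOrder β]
    [SMul 𝕜 E] [SMul 𝕜 α] [SMul 𝕜 β] {s : Set E} {t : Set β} {f : E → β} {g : β → α}
    (hg : ConvexOn 𝕜 t g) (hf : ConcaveOn 𝕜 s f) (hg_anti : AntitoneOn g t)
    (hfst : MapsTo f s t) : ConvexOn 𝕜 s (g ∘ f) := by
  refine ⟨hf.1, fun x hx y hy p q hp hq hpq => ?_⟩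
  calc g (f (p • x + q • y))
      ≤ g (p • f x + q • f y) :=
        hg_anti (hg.1 (hfst hx) (hfst hy) hp hq hpq) (hfst (hf.1 hx hy hp hq hpq))
          (hf.2 hx hy hp hq hpq)
    _ ≤ p • g (f x) + q • g (f y) := hg.2 (hfst hx) (hfst hy) hp hq hpq

section LogOneAddDiv

variable {a : ℝ}

theorem hasDerivAt_log_one_add_div {t : ℝ} (ht : t ≠ 0) (hta : t + a ≠ 0) :
    HasDerivAt (fun t => log (1 + a / t)) (-(a / (t * (t + a)))) t := by
  have h_arg : 1 + a / t ≠ 0 := by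
    rw [one_add_div ht]
    exact div_ne_zero hta ht
  have h_deriv : HasDerivAt (fun t => 1 + a / t) (a * -(t ^ 2)⁻¹) t := by
    simpa only [div_eq_mul_inv] using ((hasDerivAt_inv ht).const_mul a).const_add 1
  convert h_deriv.log h_arg using 1
  field_simp

theorem antitoneOn_log_one_add_div (ha : 0 ≤ a) :
    AntitoneOn (fun t => log (1 + a / t)) (Ioi 0) := by
  intro t (ht : 0 < t) u (hu : 0 < u) htu
  dsimp only
  gcongr

theorem convexOn_log_one_add_div (ha : 0 ≤ a) :
    ConvexOn ℝ (Ioi 0) (fun t => log (1 + a / t)) := by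
  have h_deriv : ∀ t ∈ Ioi (0 : ℝ),
      HasDerivAt (fun t => log (1 + a / t)) (-(a / (t * (t + a)))) t := fun t ht =>
    hasDerivAt_log_one_add_div ht.ne' (add_pos_of_pos_of_nonneg ht ha).ne'
  have h_mono : MonotoneOn (fun t => -(a / (t * (t + a)))) (Ioi 0) := by
    intro t (ht : 0 < t) u (hu : 0 < u) htu
    dsimp only
    gcongr
  refine MonotoneOn.convexOn_of_deriv (convex_Ioi 0)
    (fun t ht => (h_deriv t ht).continuousAt.continuousWithinAt) ?_ ?_
  · rw [interior_Ioi]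
    exact fun t ht => (h_deriv t ht).differentiableAt.differentiableWithinAt
  · rw [interior_Ioi]
    exact h_mono.congr fun t ht => (h_deriv t ht).deriv.symm

end LogOneAddDiv

theorem stmt_0_general {E : Type*} [AddCommMonoid E] [SMul ℝ E] {s : Set E} {f : E → ℝ}
    {a β : ℝ} (hβ : 1 < β) (ha : 0 ≤ a) (hf : ConcaveOn ℝ s f) (hf_pos : ∀ x ∈ s, 0 < f x) :
    ConvexOn ℝ s (fun x => logb β (1 + a / f x)) := by
  have h_log : ConvexOn ℝ s (fun x => log (1 + a / f x)) :=
    convexOn_comp_of_antitoneOn_of_mapsTo (convexOn_log_one_add_div ha) hf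
      (antitoneOn_log_one_add_div ha) hf_pos
  simpa only [logb, div_eq_inv_mul, smul_eq_mul] using h_log.smul (inv_nonneg.2 (log_pos hβ).le)

/-- For all real constants `a > 0`, `b > 0`, `c > 0`, the function
`x ↦ log₂(1 + a / (b + c * x))` is convex on `[0, ∞)`. -/
theorem stmt_0 (a b c : ℝ) (ha : 0 < a) (hb : 0 < b) (hc : 0 < c) :
    ConvexOn ℝ (Set.Ici (0 : ℝ))
      (fun x : ℝ => Real.logb 2 (1 + a / (b + c * x))) :=
  stmt_0_general one_lt_two ha.le
    ((concaveOn_const b (convex_Ici 0)).add ((concaveOn_id (convex_Ici 0)).smul hc.le))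
    fun _ hx => add_pos_of_pos_of_nonneg hb (mul_nonneg hc.le hx)
end

section
/- Let (Ω, 𝔉, P) be a probability space and T : Ω → ℝ a nonnegative integrable random variable (representing tr(R²) for the random normalized spatial correlation matrix R). Let M ≥ 1 and r ≥ 1 be integers (cast to real numbers), and let ρ > 0, β > 0, and 0 < τ_p < τ_c be real numbers. Then E[ ((τ_c − τ_p)/τ_c) · log₂(1 + ρ·M²·β² / (ρ·β²·T + M·β + (1/τ_p)·(M·β + r/ρ))) ] ≥ ((τ_c − τ_p)/τ_c) · log₂(1 + ρ·M² / (ρ·E[T] + M/β + (1/τ_p)·(M/β + r/(ρ·β²)))). -/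
open MeasureTheory

/-!
With `a = ρM²`, the effective SINR is `a / X`, where `X` is an affine function of `T` bounded
below by a positive constant. Since `log (1 + a / x) = -log (1 - a / (x + a))`, and `log` is
increasing and concave, concavity of `x ↦ 1 - a / (x + a)` makes `x ↦ log (1 + a / x)` convex, and
Jensen's inequality applies to `X`. The lower bound on `X` also makes `log (1 + a / X)` bounded,
hence integrable.
-/

section Convexity

lemma concaveOn_log_comp {E : Type*} [AddCommMonoid E] [Module ℝ E] {s : Set E} {f : E → ℝ}
    (hf : ConcaveOn ℝ s f) (hpos : ∀ x ∈ s, 0 < f x) :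
    ConcaveOn ℝ s fun x ↦ Real.log (f x) := by
  refine ⟨hf.1, fun x hx y hy p q hp hq hpq ↦ ?_⟩
  calc p • Real.log (f x) + q • Real.log (f y)
      ≤ Real.log (p • f x + q • f y) :=
        strictConcaveOn_log_Ioi.concaveOn.2 (hpos x hx) (hpos y hy) hp hq hpq
    _ ≤ Real.log (f (p • x + q • y)) :=
        Real.log_le_log (convex_Ioi (0 : ℝ) (hpos x hx) (hpos y hy) hp hq hpq)
          (hf.2 hx hy hp hq hpq)

lemma convexOn_inv_add_const (a : ℝ) : ConvexOn ℝ (Set.Ioi (-a)) fun x ↦ (x + a)⁻¹ := by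
  have h := (convexOn_zpow (𝕜 := ℝ) (-1)).translate_left a
  have hset : (fun x ↦ a + x) ⁻¹' Set.Ioi 0 = Set.Ioi (-a) := by
    simp only [Set.preimage_const_add_Ioi, zero_sub]
  rw [hset] at h
  exact h.congr fun x _ ↦ zpow_neg_one (x + a)

lemma concaveOn_div_add_const {a : ℝ} (ha : 0 ≤ a) :
    ConcaveOn ℝ (Set.Ioi (-a)) fun x ↦ x / (x + a) := by
  refine ((concaveOn_const 1 (convex_Ioi _)).sub
    ((convexOn_inv_add_const a).smul ha)).congr fun x hx ↦ ?_
  have hxa : x + a ≠ 0 := (neg_lt_iff_pos_add.mp hx).ne'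
  simp only [Pi.sub_apply, smul_eq_mul]
  field_simp
  ring

lemma convexOn_log_one_add_div_s2 {a : ℝ} (ha : 0 ≤ a) :
    ConvexOn ℝ (Set.Ioi 0) fun x ↦ Real.log (1 + a / x) := by
  have hratio : ConcaveOn ℝ (Set.Ioi 0) fun x ↦ x / (x + a) :=
    (concaveOn_div_add_const ha).subset (Set.Ioi_subset_Ioi (neg_nonpos.mpr ha)) (convex_Ioi 0)
  have hpos : ∀ x ∈ Set.Ioi (0 : ℝ), 0 < x / (x + a) := fun x hx ↦
    div_pos hx (add_pos_of_pos_of_nonneg hx ha)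
  refine (concaveOn_log_comp hratio hpos).neg.congr fun x hx ↦ ?_
  rw [Pi.neg_apply, ← Real.log_inv, inv_div, add_div, div_self (ne_of_gt hx)]

end Convexity

section Jensen

variable {Ω : Type*} [MeasurableSpace Ω] {μ : Measure Ω} {X : Ω → ℝ} {a δ : ℝ}

lemma integrable_log_one_add_div [IsFiniteMeasure μ] (hX : AEMeasurable X μ) (ha : 0 ≤ a)
    (hδ : 0 < δ) (hδX : ∀ᵐ ω ∂μ, δ ≤ X ω) :
    Integrable (fun ω ↦ Real.log (1 + a / X ω)) μ := by
  refine .of_mem_Icc 0 (Real.log (1 + a / δ)) (by fun_prop) ?_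
  filter_upwards [hδX] with ω hω
  have hX_pos : 0 < X ω := hδ.trans_le hω
  have hone : 1 ≤ 1 + a / X ω := le_add_of_nonneg_right (by positivity)
  exact ⟨Real.log_nonneg hone, Real.log_le_log (by positivity) (by gcongr)⟩

lemma log_one_add_div_integral_le [IsProbabilityMeasure μ] (hX : Integrable X μ) (ha : 0 ≤ a)
    (hδ : 0 < δ) (hδX : ∀ᵐ ω ∂μ, δ ≤ X ω) :
    Real.log (1 + a / ∫ ω, X ω ∂μ) ≤ ∫ ω, Real.log (1 + a / X ω) ∂μ := by
  have hsub : Set.Ici δ ⊆ Set.Ioi 0 := Set.Ici_subset_Ioi.mpr hδ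
  have hconvex := convexOn_log_one_add_div_s2 ha
  exact (hconvex.subset hsub (convex_Ici δ)).map_integral_le
    ((hconvex.continuousOn isOpen_Ioi).mono hsub) isClosed_Ici hδX hX
    (integrable_log_one_add_div hX.aemeasurable ha hδ hδX)

lemma logb_one_add_div_integral_le [IsProbabilityMeasure μ] {b : ℝ} (hb : 1 ≤ b)
    (hX : Integrable X μ) (ha : 0 ≤ a) (hδ : 0 < δ) (hδX : ∀ᵐ ω ∂μ, δ ≤ X ω) :
    Real.logb b (1 + a / ∫ ω, X ω ∂μ) ≤ ∫ ω, Real.logb b (1 + a / X ω) ∂μ := by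
  simp only [Real.logb, integral_div]
  exact div_le_div_of_nonneg_right (log_one_add_div_integral_le hX ha hδ hδX) (Real.log_nonneg hb)

end Jensen

lemma sinr_cancel_sq_gain {β : ℝ} (hβ : β ≠ 0) (ρ M r τp t : ℝ) :
    ρ * M ^ 2 * β ^ 2 / (ρ * β ^ 2 * t + M * β + (1 / τp) * (M * β + r / ρ)) =
      ρ * M ^ 2 / (ρ * t + M / β + (1 / τp) * (M / β + r / (ρ * β ^ 2))) := by
  have hgain : M * β = M / β * β ^ 2 := by field_simp
  have hrank : r / ρ = r / (ρ * β ^ 2) * β ^ 2 := by field_simp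
  rw [← mul_div_mul_right (ρ * M ^ 2) _ (pow_ne_zero 2 hβ), hgain, hrank]
  congr 1
  ring

theorem stmt_2_general {Ω : Type*} [MeasurableSpace Ω] (P : Measure Ω) [IsProbabilityMeasure P]
    (T : Ω → ℝ) (hT : Integrable T P) (hTnn : ∀ᵐ ω ∂P, 0 ≤ T ω)
    (M r : ℝ) (hM : 0 < M) (hr : 0 ≤ r)
    (ρ β τp τc : ℝ) (hρ : 0 < ρ) (hβ : 0 < β) (hτp : 0 < τp) (hτpc : τp ≤ τc) :
    ∫ ω, ((τc - τp) / τc) *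
        Real.logb 2 (1 + ρ * M ^ 2 * β ^ 2 /
          (ρ * β ^ 2 * T ω + M * β + (1 / τp) * (M * β + r / ρ))) ∂P ≥
      ((τc - τp) / τc) *
        Real.logb 2 (1 + ρ * M ^ 2 /
          (ρ * (∫ ω, T ω ∂P) + M / β + (1 / τp) * (M / β + r / (ρ * β ^ 2)))) := by
  set δ := M / β + (1 / τp) * (M / β + r / (ρ * β ^ 2)) with hδ_def
  have hδ : 0 < δ := by positivity
  have hX : Integrable (fun ω ↦ ρ * T ω + δ) P := (hT.const_mul ρ).add (integrable_const δ)
  have hδX : ∀ᵐ ω ∂P, δ ≤ ρ * T ω + δ := by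
    filter_upwards [hTnn] with ω hω using le_add_of_nonneg_left (mul_nonneg hρ.le hω)
  have hEX : ∫ ω, ρ * T ω + δ ∂P = ρ * (∫ ω, T ω ∂P) + δ := by
    rw [integral_add (hT.const_mul ρ) (integrable_const δ), integral_const_mul, integral_const,
      probReal_univ, one_smul]
  have hJensen := logb_one_add_div_integral_le one_le_two hX
    (by positivity : 0 ≤ ρ * M ^ 2) hδ hδX
  have hprelog : 0 ≤ (τc - τp) / τc := div_nonneg (sub_nonneg.mpr hτpc) (hτp.le.trans hτpc)
  simp only [sinr_cancel_sq_gain hβ.ne', integral_const_mul]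
  simp only [add_assoc, ← hδ_def]
  rw [← hEX]
  exact mul_le_mul_of_nonneg_left hJensen hprelog

/-- Lower bound on the average spectral efficiency with RS-LS channel estimation,
obtained from Jensen's inequality (equations (15)-(16) of the paper). -/
theorem stmt_2 {Ω : Type*} [MeasurableSpace Ω] (P : Measure Ω) [IsProbabilityMeasure P]
    (T : Ω → ℝ) (hT : Integrable T P) (hTnn : ∀ ω, 0 ≤ T ω)
    (M r : ℕ) (hM : 1 ≤ M) (hr : 1 ≤ r)
    (ρ β τp τc : ℝ) (hρ : 0 < ρ) (hβ : 0 < β) (hτp : 0 < τp) (hτpc : τp < τc) :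
    ∫ ω, ((τc - τp) / τc) *
        Real.logb 2 (1 + ρ * (M : ℝ) ^ 2 * β ^ 2 /
          (ρ * β ^ 2 * T ω + (M : ℝ) * β + (1 / τp) * ((M : ℝ) * β + (r : ℝ) / ρ))) ∂P ≥
      ((τc - τp) / τc) *
        Real.logb 2 (1 + ρ * (M : ℝ) ^ 2 /
          (ρ * (∫ ω, T ω ∂P) + (M : ℝ) / β +
            (1 / τp) * ((M : ℝ) / β + (r : ℝ) / (ρ * β ^ 2)))) :=
  stmt_2_general P T hT (.of_forall hTnn) M r (Nat.cast_pos.mpr hM) r.cast_nonneg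
    ρ β τp τc hρ hβ hτp hτpc.le
end

section
/- Let A > 0, B > 0, and τ_c > 0 be real constants, and define SE_avg(τ) = ((τ_c − τ)/τ_c) · log₂(1 + 1/(A + B/τ)) for τ > 0. Then for every τ > 0, the second derivative of SE_avg at τ equals −B·( ((2A² + 2A)·τ_c + (2A + 1)·B)·τ + (2A + 1)·B·τ_c + 2B² ) / ( ln(2) · τ_c · (A·τ + B)² · ((A + 1)·τ + B)² ). -/
/-! The argument of the logarithm is the Möbius quotient `((A + 1) * t + B) / (A * t + B)`, so the
logarithm has a rational first derivative. The prefactor is affine in `t`, so the product rule for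
second derivatives leaves no undifferentiated logarithm and the result is rational. -/

open Filter Topology

theorem one_add_one_div_add_div {K : Type*} [Field K] {a b x : K}
    (hx : x ≠ 0) (hab : a * x + b ≠ 0) :
    1 + 1 / (a + b / x) = ((a + 1) * x + b) / (a * x + b) := by
  rw [add_div_eq_mul_add_div a b hx, one_div_div, one_add_div hab]
  ring

section Derivatives

variable {𝕜 : Type*} [NontriviallyNormedField 𝕜]

theorem deriv_deriv_mul_of_hasDerivAt {𝔸 : Type*} [NormedRing 𝔸] [NormedAlgebra 𝕜 𝔸]
    {u u' v v' : 𝕜 → 𝔸} {u'' v'' : 𝔸} {x : 𝕜}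
    (hu : ∀ᶠ t in 𝓝 x, HasDerivAt u (u' t) t) (hu' : HasDerivAt u' u'' x)
    (hv : ∀ᶠ t in 𝓝 x, HasDerivAt v (v' t) t) (hv' : HasDerivAt v' v'' x) :
    deriv (deriv fun t => u t * v t) x = u'' * v x + 2 * (u' x * v' x) + u x * v'' := by
  have first_deriv : deriv (fun t => u t * v t) =ᶠ[𝓝 x] fun t => u' t * v t + u t * v' t := by
    filter_upwards [hu, hv] with t hut hvt using (hut.fun_mul hvt).deriv
  rw [first_deriv.deriv_eq,
    ((hu'.fun_mul hv.self_of_nhds).fun_add (hu.self_of_nhds.fun_mul hv')).deriv, two_mul]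
  abel

theorem hasDerivAt_mul_add_const (a b x : 𝕜) : HasDerivAt (fun t => a * t + b) a x :=
  (hasDerivAt_const_mul a).add_const b

theorem hasDerivAt_const_div_affine_mul_affine (k : 𝕜) {a b c d x : 𝕜}
    (hab : a * x + b ≠ 0) (hcd : c * x + d ≠ 0) :
    HasDerivAt (fun t => k / ((a * t + b) * (c * t + d)))
      (-(k * (a * (c * x + d) + (a * x + b) * c)) / ((a * x + b) * (c * x + d)) ^ 2) x := by
  have hden := (hasDerivAt_mul_add_const a b x).fun_mul (hasDerivAt_mul_add_const c d x)
  simpa only [zero_mul, zero_sub] using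
    (hasDerivAt_const x k).fun_div hden (mul_ne_zero hab hcd)

theorem hasDerivAt_one_add_one_div_add_div {a b x : 𝕜} (hx : x ≠ 0) (hab : a * x + b ≠ 0) :
    HasDerivAt (fun t => 1 + 1 / (a + b / t)) (b / (a * x + b) ^ 2) x := by
  have hden : HasDerivAt (fun t => a + b / t) (-b / x ^ 2) x := by
    simpa [div_eq_mul_inv] using ((hasDerivAt_inv hx).const_mul b).const_add a
  have hden_ne : a + b / x ≠ 0 := by
    rw [add_div_eq_mul_add_div a b hx]
    exact div_ne_zero hab hx
  have h := (hden.fun_inv hden_ne).const_add 1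
  simp only [one_div]
  refine h.congr_deriv ?_
  rw [add_div_eq_mul_add_div a b hx]
  field_simp

end Derivatives

theorem hasDerivAt_logb_one_add_one_div_add_div (β : ℝ) {a b x : ℝ} (hx : x ≠ 0)
    (hab : a * x + b ≠ 0) (hab' : (a + 1) * x + b ≠ 0) :
    HasDerivAt (fun t => Real.logb β (1 + 1 / (a + b / t)))
      (b / Real.log β / ((a * x + b) * ((a + 1) * x + b))) x := by
  have harg : 1 + 1 / (a + b / x) ≠ 0 := by
    rw [one_add_one_div_add_div hx hab]
    exact div_ne_zero hab' hab
  refine (((hasDerivAt_one_add_one_div_add_div hx hab).log harg).div_const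
    (Real.log β)).congr_deriv ?_
  rw [one_add_one_div_add_div hx hab]
  field_simp

/- The sign condition `hpos` says that the argument of the logarithm, the quotient of the two
factors, is positive at `τ`. -/
theorem stmt_3_general {β A B τc τ : ℝ} (hβ : 0 < β) (hβ_one : β ≠ 1) (hτc : τc ≠ 0)
    (hτ : τ ≠ 0) (hpos : 0 < (A * τ + B) * ((A + 1) * τ + B)) :
    deriv (deriv (fun t : ℝ => ((τc - t) / τc) * Real.logb β (1 + 1 / (A + B / t)))) τ =
      -(B * (((2 * A ^ 2 + 2 * A) * τc + (2 * A + 1) * B) * τ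
            + (2 * A + 1) * B * τc + 2 * B ^ 2)) /
        (Real.log β * τc * (A * τ + B) ^ 2 * ((A + 1) * τ + B) ^ 2) := by
  have hlog : Real.log β ≠ 0 := Real.log_ne_zero_of_pos_of_ne_one hβ hβ_one
  obtain ⟨hP, hQ⟩ := mul_ne_zero_iff.mp hpos.ne'
  have prefactor_deriv (t : ℝ) : HasDerivAt (fun t => (τc - t) / τc) (-1 / τc) t :=
    ((hasDerivAt_id t).const_sub τc).div_const τc
  have rate_deriv : ∀ᶠ t in 𝓝 τ, HasDerivAt (fun t => Real.logb β (1 + 1 / (A + B / t)))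
      (B / Real.log β / ((A * t + B) * ((A + 1) * t + B))) t := by
    filter_upwards [eventually_ne_nhds hτ,
      (hasDerivAt_mul_add_const A B τ).continuousAt.eventually_ne hP,
      (hasDerivAt_mul_add_const (A + 1) B τ).continuousAt.eventually_ne hQ]
      with t ht hPt hQt using hasDerivAt_logb_one_add_one_div_add_div β ht hPt hQt
  rw [deriv_deriv_mul_of_hasDerivAt (.of_forall prefactor_deriv) (hasDerivAt_const τ _)
    rate_deriv (hasDerivAt_const_div_affine_mul_affine _ hP hQ)]
  -- `field_simp` looks for its side condition with the product in this order.
  rw [mul_comm (A + 1)] at hQ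
  field_simp
  ring

/-- The second derivative of the average-SE function
`SE_avg(τ) = ((τ_c − τ)/τ_c) · log₂(1 + 1/(A + B/τ))` at any `τ > 0`
(equation (24) of the paper). -/
theorem stmt_3 (A B τc : ℝ) (hA : 0 < A) (hB : 0 < B) (hτc : 0 < τc)
    (τ : ℝ) (hτ : 0 < τ) :
    deriv (deriv (fun t : ℝ => ((τc - t) / τc) * Real.logb 2 (1 + 1 / (A + B / t)))) τ =
      -(B * (((2 * A ^ 2 + 2 * A) * τc + (2 * A + 1) * B) * τ
            + (2 * A + 1) * B * τc + 2 * B ^ 2)) /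
        (Real.log 2 * τc * (A * τ + B) ^ 2 * ((A + 1) * τ + B) ^ 2) :=
  stmt_3_general two_pos (by norm_num) hτc.ne' hτ.ne' (by positivity)
end

section
/- Let A > 0, B > 0, and τ_c > 0 be real constants, and define SE_avg(τ) = ((τ_c − τ)/τ_c) · log₂(1 + 1/(A + B/τ)) for τ > 0. Then SE_avg is strictly concave on the open interval (0, ∞). -/
/-!
Write `f τ = log₂ (1 + 1 / (A + B / τ))`, so that `SE_avg τ = f τ - τ f(τ) / τ_c`.
The logarithm of `(p x + q) / (r x + s)`, with nonnegative coefficients, is concave in `x > 0` or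
convex according to the sign of `p s - q r`. This makes `f τ` strictly concave in `τ` but
`g u = f (1 / u)` convex in `u`. The perspective `τ g(1 / τ) = τ f(τ)` of `g` is then convex too,
and a strictly concave function minus a convex one is strictly concave.
-/

open Real Set

section Perspective

variable {𝕜 E : Type*} [Field 𝕜] [LinearOrder 𝕜] [IsStrictOrderedRing 𝕜]

theorem convexOn_id_smul_of_comp_inv [AddCommMonoid E] [PartialOrder E] [Module 𝕜 E]
    [PosSMulMono 𝕜 E] {f : 𝕜 → E} (hf : ConvexOn 𝕜 (Ioi 0) fun u => f u⁻¹) :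
    ConvexOn 𝕜 (Ioi 0) fun t => t • f t := by
  refine ⟨convex_Ioi 0, fun x hx y hy a b ha hb hab => ?_⟩
  have hm : 0 < a • x + b • y := convex_Ioi 0 hx hy ha hb hab
  simp only [mem_Ioi, smul_eq_mul] at hx hy hm ⊢
  set m := a * x + b * y
  have weights_add : a * x / m + b * y / m = 1 := by rw [← add_div, div_self hm.ne']
  have inv_m : (a * x / m) * x⁻¹ + (b * y / m) * y⁻¹ = m⁻¹ := by
    field_simp
    exact hab
  have jensen := hf.2 (inv_pos.2 hx) (inv_pos.2 hy) (by positivity) (by positivity) weights_add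
  simp only [smul_eq_mul, inv_m, inv_inv] at jensen
  calc m • f m ≤ m • ((a * x / m) • f x + (b * y / m) • f y) :=
        smul_le_smul_of_nonneg_left jensen hm.le
    _ = a • x • f x + b • y • f y := by
        simp only [smul_add, smul_smul, mul_div_cancel₀ _ hm.ne']

theorem strictConcaveOn_sub_div_smul [AddCommGroup E] [PartialOrder E] [IsOrderedAddMonoid E]
    [Module 𝕜 E] [PosSMulMono 𝕜 E] {f : 𝕜 → E} {c : 𝕜} (hc : 0 < c)
    (hf : StrictConcaveOn 𝕜 (Ioi 0) f) (hf_inv : ConvexOn 𝕜 (Ioi 0) fun u => f u⁻¹) :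
    StrictConcaveOn 𝕜 (Ioi 0) fun t => ((c - t) / c) • f t := by
  refine (hf.sub_convexOn
    ((convexOn_id_smul_of_comp_inv hf_inv).smul (inv_nonneg.2 hc.le))).congr fun t _ => ?_
  rw [Pi.sub_apply, smul_smul, sub_div, div_self hc.ne', sub_smul, one_smul, div_eq_inv_mul]

end Perspective

section LogQuotient

variable {b : ℝ}

theorem hasDerivAt_logb_affine_div_affine {p q r s x : ℝ} (hpq : p * x + q ≠ 0)
    (hrs : r * x + s ≠ 0) :
    HasDerivAt (fun x => logb b ((p * x + q) / (r * x + s)))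
      ((p * s - q * r) / ((p * x + q) * (r * x + s)) / log b) x := by
  have affine (m n : ℝ) : HasDerivAt (fun x => m * x + n) m x :=
    (hasDerivAt_const_mul m).add_const n
  refine ((((affine p q).fun_div (affine r s) hrs).log (div_ne_zero hpq hrs)).div_const
    (log b)).congr_deriv ?_
  field_simp
  ring

theorem strictConcaveOn_logb_affine_div_affine {p q r s : ℝ} (hb : 1 < b) (hp : 0 < p)
    (hq : 0 ≤ q) (hr : 0 ≤ r) (hdet : q * r < p * s) :
    StrictConcaveOn ℝ (Ioi 0) fun x => logb b ((p * x + q) / (r * x + s)) := by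
  have hs : 0 < s := (mul_pos_iff_of_pos_left hp).1 ((mul_nonneg hq hr).trans_lt hdet)
  have hderiv {x : ℝ} (hx : 0 < x) :=
    hasDerivAt_logb_affine_div_affine (b := b) (p := p) (q := q) (r := r) (s := s) (x := x)
      (by positivity) (by positivity)
  refine StrictAntiOn.strictConcaveOn_of_deriv (convex_Ioi 0)
    (fun x hx => (hderiv hx).continuousAt.continuousWithinAt) ?_
  rw [interior_Ioi]
  intro x (hx : 0 < x) y (hy : 0 < y) hxy
  rw [(hderiv hx).deriv, (hderiv hy).deriv]
  have denom_lt : (p * x + q) * (r * x + s) < (p * y + q) * (r * y + s) :=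
    mul_lt_mul (by gcongr) (by gcongr) (by positivity) (by positivity)
  exact div_lt_div_of_pos_right
    (div_lt_div_of_pos_left (sub_pos.2 hdet) (by positivity) denom_lt) (log_pos hb)

variable {A B : ℝ}

theorem strictConcaveOn_logb_one_add_one_div_add_div (hb : 1 < b) (hA : 0 ≤ A) (hB : 0 < B) :
    StrictConcaveOn ℝ (Ioi 0) fun t => logb b (1 + 1 / (A + B / t)) := by
  refine (strictConcaveOn_logb_affine_div_affine (p := A + 1) (q := B) (r := A) (s := B)
    hb (by positivity) hB.le hA (by linarith)).congr fun t (ht : 0 < t) => congrArg (logb b) ?_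
  field_simp
  ring

theorem convexOn_logb_one_add_one_div_add_mul (hb : 1 < b) (hA : 0 ≤ A) (hB : 0 < B) :
    ConvexOn ℝ (Ioi 0) fun u => logb b (1 + 1 / (A + B * u)) := by
  refine (strictConcaveOn_logb_affine_div_affine (p := B) (q := A) (r := B) (s := A + 1)
    hb hB hA hB.le (by linarith)).concaveOn.neg.congr fun u (hu : 0 < u) => ?_
  rw [Pi.neg_apply, ← logb_inv]
  congr 1
  field_simp
  ring

end LogQuotient

/-- The average-SE function `SE_avg(τ) = ((τ_c − τ)/τ_c) · log₂(1 + 1/(A + B/τ))`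
is strictly concave on `(0, ∞)` (first claim of Lemma 2 of the paper). -/
theorem stmt_4 (A B τc : ℝ) (hA : 0 < A) (hB : 0 < B) (hτc : 0 < τc) :
    StrictConcaveOn ℝ (Set.Ioi (0 : ℝ))
      (fun τ : ℝ => ((τc - τ) / τc) * Real.logb 2 (1 + 1 / (A + B / τ))) := by
  have concave_in_τ := strictConcaveOn_logb_one_add_one_div_add_div one_lt_two hA.le hB
  have convex_in_inv_τ := convexOn_logb_one_add_one_div_add_mul one_lt_two hA.le hB
  refine strictConcaveOn_sub_div_smul hτc concave_in_τ ?_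
  simpa only [div_inv_eq_mul] using convex_in_inv_τ
end

section
/- Let A > 0, B > 0, and τ_c > 0 be real constants, and define SE_avg(τ) = ((τ_c − τ)/τ_c) · log₂(1 + 1/(A + B/τ)) for τ > 0. Then there exists a unique τ_opt with 0 < τ_opt < τ_c such that SE_avg(τ) < SE_avg(τ_opt) for every τ with 0 < τ < τ_c and τ ≠ τ_opt. -/
/-!
Writing `1 / (A + B / τ) = τ / (A * τ + B)`, the effective SINR is concave and strictly increasing
in `τ ≥ 0`, so the spectral efficiency `log₂ (1 + SINR)` is strictly concave and increasing. The
fraction `(τc - τ) / τc` of the block left for data is affine, positive and decreasing on `(0, τc)`,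
and by Chebyshev's inequality for oppositely ordered factors the product stays strictly concave.
It is continuous on `[0, τc]`, vanishes at both ends and is positive in between, so its maximum
over `[0, τc]` is attained inside, and only once by strict concavity.
-/

open Set

theorem strictConcaveOn_mul_of_antivaryOn {𝕜 E : Type*} [CommRing 𝕜] [LinearOrder 𝕜]
    [IsStrictOrderedRing 𝕜] [AddCommMonoid E] [Module 𝕜 E] {s : Set E} {f g : E → 𝕜}
    (hf : ConcaveOn 𝕜 s f) (hg : StrictConcaveOn 𝕜 s g) (hf_pos : ∀ x ∈ s, 0 < f x)
    (hg_nonneg : ∀ x ∈ s, 0 ≤ g x) (hfg : AntivaryOn f g s) :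
    StrictConcaveOn 𝕜 s (fun x ↦ f x * g x) := by
  refine ⟨hf.1, fun x hx y hy hxy a b ha hb hab ↦ ?_⟩
  have hz : a • x + b • y ∈ s := hf.1 hx hy ha.le hb.le hab
  have hf_le : a * f x + b * f y ≤ f (a • x + b • y) := hf.2 hx hy ha.le hb.le hab
  have hg_lt : a * g x + b * g y < g (a • x + b • y) := hg.2 hx hy hxy ha hb hab
  have hg_avg : 0 ≤ a * g x + b * g y :=
    add_nonneg (mul_nonneg ha.le (hg_nonneg x hx)) (mul_nonneg hb.le (hg_nonneg y hy))
  have chebyshev : a * b * ((f y - f x) * (g y - g x)) ≤ 0 :=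
    mul_nonpos_of_nonneg_of_nonpos (mul_nonneg ha.le hb.le) (hfg.sub_mul_sub_nonpos hx hy)
  calc a • (f x * g x) + b • (f y * g y)
      = (a * f x + b * f y) * (a * g x + b * g y) + a * b * ((f y - f x) * (g y - g x)) := by
        obtain rfl : b = 1 - a := eq_sub_of_add_eq' hab
        simp only [smul_eq_mul]
        ring
    _ ≤ (a * f x + b * f y) * (a * g x + b * g y) := add_le_of_nonpos_right chebyshev
    _ ≤ f (a • x + b • y) * (a * g x + b * g y) := mul_le_mul_of_nonneg_right hf_le hg_avg
    _ < f (a • x + b • y) * g (a • x + b • y) := mul_lt_mul_of_pos_left hg_lt (hf_pos _ hz)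

theorem strictConcaveOn_logb_Ioi {b : ℝ} (hb : 1 < b) :
    StrictConcaveOn ℝ (Ioi 0) (Real.logb b) := by
  refine ⟨convex_Ioi 0, fun x hx y hy hxy s t hs ht hst ↦ ?_⟩
  calc s • Real.logb b x + t • Real.logb b y
      = (s • Real.log x + t • Real.log y) / Real.log b := by
        simp only [Real.logb, smul_eq_mul]
        ring
    _ < Real.logb b (s • x + t • y) :=
        div_lt_div_of_pos_right (strictConcaveOn_log_Ioi.2 hx hy hxy hs ht hst) (Real.log_pos hb)

theorem existsUnique_forall_lt_of_strictConcaveOn {E : Type*} [TopologicalSpace E]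
    [AddCommMonoid E] [Module ℝ E] {s K : Set E} {f : E → ℝ} {z : E}
    (hf : StrictConcaveOn ℝ s f) (hK : IsCompact K) (hsK : s ⊆ K) (hcont : ContinuousOn f K)
    (hz : z ∈ K) (hlt : ∀ y ∈ K \ s, f y < f z) :
    ∃! x, x ∈ s ∧ ∀ y ∈ s, y ≠ x → f y < f x := by
  obtain ⟨x, hx, hmax⟩ := hK.exists_isMaxOn_mem_subset hcont hz hlt
  have hmax_s : IsMaxOn f s x := hmax.on_subset hsK
  refine ⟨x, ⟨hx, fun y hy hyx ↦ (hmax_s hy).lt_of_ne fun heq ↦ hyx ?_⟩, ?_⟩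
  · have hmax_y : IsMaxOn f s y := fun w hw ↦ (hmax_s hw).trans_eq heq.symm
    exact hf.eq_of_isMaxOn hmax_y hmax_s hy hx
  · rintro y ⟨hy, hy_max⟩
    by_contra hyx
    exact (hy_max x hx (Ne.symm hyx)).not_ge (hmax_s hy)

/-- The effective SINR `1 / (A + B / τ)` after spending `τ` symbols on pilots. It is encoded with
cleared denominators so that it is continuous at `τ = 0`, where `B / 0 = 0` would give the
value `1 / A`. -/
noncomputable def effectiveSINR (A B τ : ℝ) : ℝ := τ / (A * τ + B)

/-- The spectral efficiency `log₂ (1 + SINR)` of a data symbol, in bits, when `τ` symbols are spent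
on pilots. -/
noncomputable def spectralEfficiency (A B τ : ℝ) : ℝ := Real.logb 2 (1 + effectiveSINR A B τ)

/-- The average of `spectralEfficiency` over a coherence block of length `τc`, of which the first
`τ` symbols carry pilots and no data. -/
noncomputable def averageSE (A B τc τ : ℝ) : ℝ := (τc - τ) / τc * spectralEfficiency A B τ

section AverageSE

variable {A B τc τ : ℝ}

theorem effectiveSINR_eq_one_div (hτ : τ ≠ 0) : effectiveSINR A B τ = 1 / (A + B / τ) := by
  rw [effectiveSINR, ← one_div_div, add_div, mul_div_cancel_right₀ A hτ]

theorem effectiveSINR_nonneg (hA : 0 ≤ A) (hB : 0 ≤ B) (hτ : 0 ≤ τ) : 0 ≤ effectiveSINR A B τ := by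
  unfold effectiveSINR
  positivity

theorem strictMonoOn_effectiveSINR (hA : 0 ≤ A) (hB : 0 < B) :
    StrictMonoOn (effectiveSINR A B) (Ici 0) := by
  intro x (hx : 0 ≤ x) y (hy : 0 ≤ y) hxy
  unfold effectiveSINR
  rw [div_lt_div_iff₀ (by positivity) (by positivity)]
  linear_combination B * hxy

theorem concaveOn_effectiveSINR (hA : 0 ≤ A) (hB : 0 < B) :
    ConcaveOn ℝ (Ici 0) (effectiveSINR A B) := by
  refine ⟨convex_Ici 0, fun x (hx : 0 ≤ x) y (hy : 0 ≤ y) a b ha hb hab ↦ ?_⟩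
  have hDx : 0 < A * x + B := by positivity
  have hDy : 0 < A * y + B := by positivity
  have hDz : 0 < A * (a * x + b * y) + B := by positivity
  have gap : (a * x + b * y) / (A * (a * x + b * y) + B)
      - (a * (x / (A * x + B)) + b * (y / (A * y + B)))
      = a * b * A * B * (x - y) ^ 2
        / ((A * x + B) * (A * y + B) * (A * (a * x + b * y) + B)) := by
    obtain rfl : b = 1 - a := eq_sub_of_add_eq' hab
    field_simp
    ring
  refine sub_nonneg.mp (gap.symm ▸ div_nonneg ?_ (mul_pos (mul_pos hDx hDy) hDz).le)
  positivity

theorem continuousOn_effectiveSINR (hA : 0 ≤ A) (hB : 0 < B) :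
    ContinuousOn (effectiveSINR A B) (Ici 0) := by
  have hD : ∀ τ ∈ Ici (0 : ℝ), A * τ + B ≠ 0 := fun τ (hτ : 0 ≤ τ) ↦ by positivity
  exact continuousOn_id.div (by fun_prop) hD

theorem one_add_effectiveSINR_pos (hA : 0 ≤ A) (hB : 0 ≤ B) (hτ : 0 ≤ τ) :
    0 < 1 + effectiveSINR A B τ :=
  add_pos_of_pos_of_nonneg one_pos (effectiveSINR_nonneg hA hB hτ)

@[simp]
theorem spectralEfficiency_zero : spectralEfficiency A B 0 = 0 := by
  simp [spectralEfficiency, effectiveSINR]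

theorem strictMonoOn_spectralEfficiency (hA : 0 ≤ A) (hB : 0 < B) :
    StrictMonoOn (spectralEfficiency A B) (Ici 0) := fun _ hx _ hy hxy ↦
  Real.logb_lt_logb one_lt_two (one_add_effectiveSINR_pos hA hB.le hx)
    (add_lt_add_right (strictMonoOn_effectiveSINR hA hB hx hy hxy) 1)

theorem spectralEfficiency_pos (hA : 0 ≤ A) (hB : 0 < B) (hτ : 0 < τ) :
    0 < spectralEfficiency A B τ :=
  spectralEfficiency_zero.symm.trans_lt
    (strictMonoOn_spectralEfficiency hA hB self_mem_Ici hτ.le hτ)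

theorem strictConcaveOn_spectralEfficiency (hA : 0 ≤ A) (hB : 0 < B) :
    StrictConcaveOn ℝ (Ici 0) (spectralEfficiency A B) := by
  have himage : (fun τ ↦ 1 + effectiveSINR A B τ) '' Ici 0 ⊆ Ioi 0 :=
    image_subset_iff.mpr fun _ hτ ↦ one_add_effectiveSINR_pos hA hB.le hτ
  have hconc : ConcaveOn ℝ (Ici 0) (fun τ ↦ 1 + effectiveSINR A B τ) :=
    (concaveOn_const 1 (convex_Ici 0)).add (concaveOn_effectiveSINR hA hB)
  have hinj : InjOn (fun τ ↦ 1 + effectiveSINR A B τ) (Ici 0) :=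
    (add_right_injective 1).comp_injOn (strictMonoOn_effectiveSINR hA hB).injOn
  have himage_convex : Convex ℝ ((fun τ ↦ 1 + effectiveSINR A B τ) '' Ici 0) :=
    ((convex_Ici 0).isPreconnected.image _
      (continuousOn_const.add (continuousOn_effectiveSINR hA hB))).ordConnected.convex
  exact ((strictConcaveOn_logb_Ioi one_lt_two).subset himage himage_convex).comp_concaveOn hconc
    ((Real.strictMonoOn_logb one_lt_two).monotoneOn.mono himage) hinj

theorem continuousOn_spectralEfficiency (hA : 0 ≤ A) (hB : 0 < B) :
    ContinuousOn (spectralEfficiency A B) (Ici 0) :=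
  (continuousOn_const.add (continuousOn_effectiveSINR hA hB)).logb
    fun _ hτ ↦ (one_add_effectiveSINR_pos hA hB.le hτ).ne'

theorem concaveOn_dataFraction : ConcaveOn ℝ univ fun τ ↦ (τc - τ) / τc := by
  refine ⟨convex_univ, fun x _ y _ a b _ _ hab ↦ le_of_eq ?_⟩
  simp only [smul_eq_mul]
  linear_combination (τc / τc) * hab

theorem averageSE_eq (hτ : τ ≠ 0) :
    averageSE A B τc τ = (τc - τ) / τc * Real.logb 2 (1 + 1 / (A + B / τ)) := by
  rw [averageSE, spectralEfficiency, effectiveSINR_eq_one_div hτ]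

theorem averageSE_pos (hA : 0 ≤ A) (hB : 0 < B) (hτ : τ ∈ Ioo 0 τc) : 0 < averageSE A B τc τ :=
  mul_pos (div_pos (sub_pos.mpr hτ.2) (hτ.1.trans hτ.2)) (spectralEfficiency_pos hA hB hτ.1)

theorem continuousOn_averageSE (hA : 0 ≤ A) (hB : 0 < B) :
    ContinuousOn (averageSE A B τc) (Ici 0) :=
  ContinuousOn.mul (by fun_prop) (continuousOn_spectralEfficiency hA hB)

theorem strictConcaveOn_averageSE (hA : 0 ≤ A) (hB : 0 < B) :
    StrictConcaveOn ℝ (Ioo 0 τc) (averageSE A B τc) := by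
  have hsub : Ioo 0 τc ⊆ Ici 0 := fun _ hτ ↦ hτ.1.le
  have hanti : AntitoneOn (fun τ ↦ (τc - τ) / τc) (Ioo 0 τc) := fun x hx y _ hxy ↦
    div_le_div_of_nonneg_right (sub_le_sub_left hxy τc) (hx.1.trans hx.2).le
  have hmono : MonotoneOn (spectralEfficiency A B) (Ioo 0 τc) :=
    (strictMonoOn_spectralEfficiency hA hB).monotoneOn.mono hsub
  exact strictConcaveOn_mul_of_antivaryOn
    (concaveOn_dataFraction.subset (subset_univ _) (convex_Ioo 0 τc))
    ((strictConcaveOn_spectralEfficiency hA hB).subset hsub (convex_Ioo 0 τc))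
    (fun τ hτ ↦ div_pos (sub_pos.mpr hτ.2) (hτ.1.trans hτ.2))
    (fun τ hτ ↦ (spectralEfficiency_pos hA hB hτ.1).le)
    (hanti.antivaryOn hmono)

theorem existsUnique_forall_averageSE_lt (hA : 0 ≤ A) (hB : 0 < B) (hτc : 0 < τc) :
    ∃! τopt, τopt ∈ Ioo 0 τc ∧
      ∀ τ ∈ Ioo 0 τc, τ ≠ τopt → averageSE A B τc τ < averageSE A B τc τopt := by
  have hmid : τc / 2 ∈ Ioo 0 τc := ⟨half_pos hτc, half_lt_self hτc⟩
  refine existsUnique_forall_lt_of_strictConcaveOn (strictConcaveOn_averageSE hA hB) isCompact_Icc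
    Ioo_subset_Icc_self ((continuousOn_averageSE hA hB).mono Icc_subset_Ici_self)
    (Ioo_subset_Icc_self hmid) fun τ hτ ↦ ?_
  have hboundary : averageSE A B τc τ = 0 := by
    rw [Icc_sdiff_Ioo_same hτc.le] at hτ
    rcases hτ with rfl | rfl <;> simp [averageSE]
  exact hboundary.trans_lt (averageSE_pos hA hB hmid)

end AverageSE

/-- Lemma 2 of the paper: the average-SE function
`SE_avg(τ) = ((τ_c − τ)/τ_c) · log₂(1 + 1/(A + B/τ))` has a unique global
maximizer `τ_opt` on `(0, τ_c)`, and `0 < τ_opt < τ_c`. -/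
theorem stmt_6 (A B τc : ℝ) (hA : 0 < A) (hB : 0 < B) (hτc : 0 < τc) :
    ∃! τopt : ℝ, 0 < τopt ∧ τopt < τc ∧
      ∀ τ : ℝ, 0 < τ → τ < τc → τ ≠ τopt →
        ((τc - τ) / τc) * Real.logb 2 (1 + 1 / (A + B / τ)) <
          ((τc - τopt) / τc) * Real.logb 2 (1 + 1 / (A + B / τopt)) := by
  obtain ⟨τopt, ⟨hopt, hmax⟩, hunique⟩ := existsUnique_forall_averageSE_lt hA.le hB hτc
  refine ⟨τopt, ⟨hopt.1, hopt.2, fun τ h0 hc hne ↦ ?_⟩, fun τ' ⟨h0', hc', hmax'⟩ ↦ ?_⟩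
  · rw [← averageSE_eq h0.ne', ← averageSE_eq hopt.1.ne']
    exact hmax τ ⟨h0, hc⟩ hne
  · refine hunique τ' ⟨⟨h0', hc'⟩, fun τ hτ hne ↦ ?_⟩
    rw [averageSE_eq hτ.1.ne', averageSE_eq h0'.ne']
    exact hmax' τ hτ.1 hτ.2 hne
end

section
/- Let A > 0, B > 0, and τ_c > 0 be real constants, define g(τ) = log₂(e) · ((τ_c − τ)/τ_c) · (1/(A + B/τ)) for τ > 0, and set τ* = (√(B·(B + A·τ_c)) − B)/A. Then the derivative of g at τ* equals 0. -/
/-!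
Away from `τ = 0` the objective is `c / T * (τ * (T - τ) / (A * τ + B))`, so its derivative has
numerator `B * T - 2 * B * τ - A * τ ^ 2`. Completing the square, the critical points are the
solutions of `(A * τ + B) ^ 2 = B * (B + A * T)`, and `τ*` is the one with `A * τ + B` the positive
square root. The pole `A * τ + B = 0` is excluded because `B * (B + A * T)` is nonzero.
-/

/-- The low-SNR approximation of the average spectral efficiency as a function of the pilot length
`τ`, for a coherence block of length `T`. The factor `log₂ e` is abstracted to a constant `c`. -/
def approxSE {K : Type*} [Field K] (c A B T τ : K) : K :=
  c * ((T - τ) / T) * (1 / (A + B / τ))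

theorem hasDerivAt_approxSE {𝕜 : Type*} [NontriviallyNormedField 𝕜] (c A B T : 𝕜) {t : 𝕜}
    (ht : t ≠ 0) (hpole : A * t + B ≠ 0) :
    HasDerivAt (approxSE c A B T)
      (c / T * ((B * T - 2 * B * t - A * t ^ 2) / (A * t + B) ^ 2)) t := by
  have hfrac : HasDerivAt (fun τ => (T - τ) * τ / (A * τ + B))
      ((B * T - 2 * B * t - A * t ^ 2) / (A * t + B) ^ 2) t := by
    have hnum := ((hasDerivAt_id' t).const_sub T).fun_mul (hasDerivAt_id' t)
    have hden := ((hasDerivAt_id' t).const_mul A).add_const B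
    refine (hnum.fun_div hden hpole).congr_deriv ?_
    ring
  refine (hfrac.const_mul (c / T)).congr_of_eventuallyEq ?_
  filter_upwards [eventually_ne_nhds ht] with τ hτ
  have hadd : A + B / τ = (A * τ + B) / τ := by field_simp
  rw [approxSE, hadd, one_div_div]
  ring

theorem mul_sq_add_two_mul_eq_of_sq_eq {K : Type*} [Field K] {A B T t : K} (hA : A ≠ 0)
    (h : (A * t + B) ^ 2 = B * (B + A * T)) : A * t ^ 2 + 2 * B * t = B * T :=
  mul_left_cancel₀ hA (by linear_combination h)

theorem hasDerivAt_approxSE_zero_of_sq_eq {𝕜 : Type*} [NontriviallyNormedField 𝕜] (c : 𝕜)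
    {A B T t : 𝕜} (hA : A ≠ 0) (hT : T ≠ 0) (hdisc : B * (B + A * T) ≠ 0)
    (h : (A * t + B) ^ 2 = B * (B + A * T)) : HasDerivAt (approxSE c A B T) 0 t := by
  have hquad := mul_sq_add_two_mul_eq_of_sq_eq hA h
  have hpole : A * t + B ≠ 0 := (pow_ne_zero_iff two_ne_zero).mp (h.trans_ne hdisc)
  have ht : t ≠ 0 := by
    rintro rfl
    exact mul_ne_zero (left_ne_zero_of_mul hdisc) hT (by linear_combination -hquad)
  refine (hasDerivAt_approxSE c A B T ht hpole).congr_deriv ?_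
  have hnum : B * T - 2 * B * t - A * t ^ 2 = 0 := by linear_combination -hquad
  rw [hnum, zero_div, mul_zero]

theorem stmt_7_general {A B τc : ℝ} (hA : A ≠ 0) (hτc : τc ≠ 0) (hdisc : 0 < B * (B + A * τc)) :
    HasDerivAt (approxSE (Real.logb 2 (Real.exp 1)) A B τc) 0
      ((Real.sqrt (B * (B + A * τc)) - B) / A) := by
  refine hasDerivAt_approxSE_zero_of_sq_eq _ hA hτc hdisc.ne' ?_
  rw [mul_div_cancel₀ _ hA, sub_add_cancel, Real.sq_sqrt hdisc.le]

/-- The low-SNR approximate average-SE function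
`g(τ) = log₂(e) · ((τ_c − τ)/τ_c) · (1/(A + B/τ))` has vanishing derivative at
the closed-form pilot length `τ* = (√(B(B + A·τ_c)) − B)/A`
(equation (20) of the paper). -/
theorem stmt_7 (A B τc : ℝ) (hA : 0 < A) (hB : 0 < B) (hτc : 0 < τc) :
    deriv (fun τ : ℝ =>
        Real.logb 2 (Real.exp 1) * ((τc - τ) / τc) * (1 / (A + B / τ)))
      ((Real.sqrt (B * (B + A * τc)) - B) / A) = 0 :=
  (stmt_7_general hA.ne' hτc.ne' (by positivity)).deriv
end

section
/- Let A > 0, B > 0, and τ_c > 0 be real constants, define g(τ) = log₂(e) · ((τ_c − τ)/τ_c) · (1/(A + B/τ)) for τ > 0, and set τ* = (√(B·(B + A·τ_c)) − B)/A. Then g(τ) < g(τ*) for every τ with 0 < τ < τ_c and τ ≠ τ*; that is, τ* is the unique maximizer of g on the interval (0, τ_c). -/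
/-!
Up to a positive constant, `g(τ)` is the rational function `(τ_c - τ) τ / (A τ + B)`, whose critical
points `t` are the roots of `A t² + 2 B t = B τ_c`. For such a `t` the function equals
`t² / B - (τ - t)² / (A τ + B)`, so wherever `A τ + B > 0` it is largest exactly at `τ = t`.
-/

theorem sub_mul_div_eq_sq_div_sub_sq_div {K : Type*} [Field K] {a b c t x : K}
    (hb : b ≠ 0) (hx : a * x + b ≠ 0) (ht : a * t ^ 2 + 2 * b * t = b * c) :
    (c - x) * x / (a * x + b) = t ^ 2 / b - (x - t) ^ 2 / (a * x + b) := by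
  rw [div_sub_div _ _ hb hx, div_eq_div_iff hx (mul_ne_zero hb hx)]
  linear_combination -(a * x + b) * x * ht

theorem sub_mul_div_lt_sub_mul_div_of_ne {K : Type*} [Field K] [LinearOrder K]
    [IsStrictOrderedRing K] {a b c t x : K} (hb : b ≠ 0) (hat : a * t + b ≠ 0)
    (hax : 0 < a * x + b) (ht : a * t ^ 2 + 2 * b * t = b * c) (hne : x ≠ t) :
    (c - x) * x / (a * x + b) < (c - t) * t / (a * t + b) := by
  have gap_pos : 0 < (x - t) ^ 2 / (a * x + b) :=
    div_pos (sq_pos_of_ne_zero (sub_ne_zero.mpr hne)) hax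
  calc (c - x) * x / (a * x + b)
      = t ^ 2 / b - (x - t) ^ 2 / (a * x + b) :=
        sub_mul_div_eq_sq_div_sub_sq_div hb hax.ne' ht
    _ < t ^ 2 / b := sub_lt_self _ gap_pos
    _ = (c - t) * t / (a * t + b) := by
        simp [sub_mul_div_eq_sq_div_sub_sq_div hb hat ht]

/-- The low-SNR approximation `g(τ)` of the average spectral efficiency with pilot length `τ` and
coherence block length `τc`. It is meaningful for `τ ≠ 0`, since Lean sets `B / 0 = 0`. -/
noncomputable def lowSNRSpectralEfficiency (A B τc τ : ℝ) : ℝ :=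
  Real.logb 2 (Real.exp 1) * ((τc - τ) / τc) * (1 / (A + B / τ))

/-- The pilot length `τ*` that maximizes `lowSNRSpectralEfficiency A B τc`. It is meaningful for
`A ≠ 0` and a nonnegative radicand. -/
noncomputable def optimalPilotLength (A B τc : ℝ) : ℝ :=
  (Real.sqrt (B * (B + A * τc)) - B) / A

section

variable {A B τc τ : ℝ}

theorem lowSNRSpectralEfficiency_eq_mul_div (hτ : τ ≠ 0) :
    lowSNRSpectralEfficiency A B τc τ =
      Real.logb 2 (Real.exp 1) / τc * ((τc - τ) * τ / (A * τ + B)) := by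
  rw [lowSNRSpectralEfficiency, add_div' _ _ _ hτ, one_div_div]
  ring

theorem mul_optimalPilotLength_add (hA : A ≠ 0) :
    A * optimalPilotLength A B τc + B = Real.sqrt (B * (B + A * τc)) := by
  rw [optimalPilotLength, mul_div_cancel₀ _ hA, sub_add_cancel]

theorem optimalPilotLength_quadratic_eq (hA : A ≠ 0) (h : 0 ≤ B * (B + A * τc)) :
    A * optimalPilotLength A B τc ^ 2 + 2 * B * optimalPilotLength A B τc = B * τc := by
  have sq_eq : (A * optimalPilotLength A B τc + B) ^ 2 = B * (B + A * τc) := by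
    rw [mul_optimalPilotLength_add hA, Real.sq_sqrt h]
  apply mul_left_cancel₀ hA
  linear_combination sq_eq

theorem optimalPilotLength_ne_zero (hA : A ≠ 0) (hB : B ≠ 0) (hτc : τc ≠ 0)
    (h : 0 ≤ B * (B + A * τc)) : optimalPilotLength A B τc ≠ 0 := by
  intro h_zero
  have root := optimalPilotLength_quadratic_eq hA h
  simp [h_zero, hB, hτc] at root

end

theorem stmt_8_general {A B τc τ : ℝ} (hA : A ≠ 0) (hB : 0 < B) (hτc : 0 < τc)
    (hABτc : 0 < B + A * τc) (hτ : τ ≠ 0) (hABτ : 0 < A * τ + B)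
    (hne : τ ≠ optimalPilotLength A B τc) :
    lowSNRSpectralEfficiency A B τc τ <
      lowSNRSpectralEfficiency A B τc (optimalPilotLength A B τc) := by
  have radicand_pos : 0 < B * (B + A * τc) := mul_pos hB hABτc
  have opt_ne_zero := optimalPilotLength_ne_zero hA hB.ne' hτc.ne' radicand_pos.le
  have opt_denom_ne_zero : A * optimalPilotLength A B τc + B ≠ 0 := by
    rw [mul_optimalPilotLength_add hA]
    exact (Real.sqrt_pos.mpr radicand_pos).ne'
  have log_pos : 0 < Real.logb 2 (Real.exp 1) :=
    Real.logb_pos one_lt_two (Real.one_lt_exp_iff.mpr one_pos)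
  rw [lowSNRSpectralEfficiency_eq_mul_div hτ, lowSNRSpectralEfficiency_eq_mul_div opt_ne_zero]
  exact mul_lt_mul_of_pos_left
    (sub_mul_div_lt_sub_mul_div_of_ne hB.ne' opt_denom_ne_zero hABτ
      (optimalPilotLength_quadratic_eq hA radicand_pos.le) hne)
    (div_pos log_pos hτc)

/-- The closed-form pilot length `τ* = (√(B(B + A·τ_c)) − B)/A` is the unique
maximizer on `(0, τ_c)` of the low-SNR approximate average-SE function
`g(τ) = log₂(e) · ((τ_c − τ)/τ_c) · (1/(A + B/τ))`. -/
theorem stmt_8 (A B τc : ℝ) (hA : 0 < A) (hB : 0 < B) (hτc : 0 < τc) :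
    ∀ τ : ℝ, 0 < τ → τ < τc → τ ≠ (Real.sqrt (B * (B + A * τc)) - B) / A →
      Real.logb 2 (Real.exp 1) * ((τc - τ) / τc) * (1 / (A + B / τ)) <
        Real.logb 2 (Real.exp 1) *
          ((τc - (Real.sqrt (B * (B + A * τc)) - B) / A) / τc) *
          (1 / (A + B / ((Real.sqrt (B * (B + A * τc)) - B) / A))) :=
  fun _ hτ _ hne =>
    stmt_8_general hA.ne' hB hτc (by positivity) hτ.ne' (by positivity) hne
end

section
/- Let (Ω, 𝔉, P) be a probability space; let M ≥ r ≥ 1 be integers and ρ > 0, β > 0, τ_p > 0 real numbers. Let R : Matrix (Fin M) (Fin M) ℂ with tr(R) = M, and U₁ : Matrix (Fin M) (Fin r) ℂ with U₁ᴴ·U₁ = I_r and (U₁·U₁ᴴ)·R = R. Let s : Ω → ℂ and h, w, n : Ω → ℂ^M be such that s, h, w, n are mutually independent; E[s] = 0 and E[|s|²] = 1; E[h_i] = 0 and E[h_i·conj(h_j)] = β·R_{i,j} for all i, j; E[(Σ_i |h_i|²)²] = β²·(tr R)² + β²·tr(R²); E[w_i] = 0 and E[w_i·conj(w_j)] = (U₁·U₁ᴴ)_{i,j}/(ρ·τ_p)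 for all i, j; E[n_i] = 0 and E[n_i·conj(n_j)] = δ_{ij} for all i, j; and all random variables appearing below are integrable. Define υ = √ρ·( Σ_i conj(h_i)·h_i + Σ_i conj(w_i)·h_i − M·β )·s + Σ_i conj(h_i + w_i)·n_i. Then E[|υ|²] = ρ·β²·tr(R²) + M·β + (1/τ_p)·( M·β + r/ρ ). -/
open MeasureTheory ProbabilityTheory

/-! The effective noise is `υ = √ρ * a * s + b` with `a = (hᴴh - E[hᴴh]) + wᴴh` and
`b = hᴴn + wᴴn`. Each of these three sums has orthogonal terms, because one term is linear in a
centred variable (`s`, `w` and `h` respectively) which is independent of everything else in the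
cross moment. Hence powers add, and the power of `xᴴy` for independent `x`, `y` is
`tr (E[x xᴴ] E[y yᴴ])`. -/

section MeanPower

variable {Ω 𝕜 : Type*} [MeasurableSpace Ω] [RCLike 𝕜] {μ : Measure Ω} {f g : Ω → 𝕜}

/-- The power `E[|f|²]` of a random signal `f`, taken as a scalar of `𝕜` so that it can be compared
with traces of correlation matrices over `𝕜`. -/
noncomputable def meanPower (f : Ω → 𝕜) (μ : Measure Ω) : 𝕜 :=
  ∫ ω, f ω * star (f ω) ∂μ

theorem meanPower_eq_integral_norm_sq (f : Ω → 𝕜) (μ : Measure Ω) :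
    meanPower f μ = ((∫ ω, ‖f ω‖ ^ 2 ∂μ : ℝ) : 𝕜) := by
  rw [meanPower, ← integral_ofReal]
  exact integral_congr_ae (.of_forall fun ω => by simpa using RCLike.mul_conj (f ω))

theorem memLp_two_of_integrable_mul_star (hf : AEStronglyMeasurable f μ)
    (hff : Integrable (fun ω => f ω * star (f ω)) μ) : MemLp f 2 μ := by
  rw [memLp_two_iff_integrable_sq_norm hf]
  exact hff.norm.congr (.of_forall fun ω => by simp [sq])

theorem meanPower_const_mul (c : 𝕜) (f : Ω → 𝕜) (μ : Measure Ω) :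
    meanPower (fun ω => c * f ω) μ = c * star c * meanPower f μ := by
  rw [meanPower, meanPower, ← integral_const_mul]
  exact integral_congr_ae (.of_forall fun ω => by simp only [star_mul']; ring)

theorem meanPower_add_of_integral_mul_star_eq_zero (hf : MemLp f 2 μ) (hg : MemLp g 2 μ)
    (hfg : ∫ ω, f ω * star (g ω) ∂μ = 0) :
    meanPower (fun ω => f ω + g ω) μ = meanPower f μ + meanPower g μ := by
  have hgf : ∫ ω, g ω * star (f ω) ∂μ = 0 := calc
    ∫ ω, g ω * star (f ω) ∂μ = ∫ ω, star (f ω * star (g ω)) ∂μ := by simp only [star_mul, star_star]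
    _ = star (∫ ω, f ω * star (g ω) ∂μ) := integral_conj
    _ = 0 := by rw [hfg, star_zero]
  have hff_int : Integrable (fun ω => f ω * star (f ω)) μ := hf.integrable_mul hf.star
  have hfg_int : Integrable (fun ω => f ω * star (g ω)) μ := hf.integrable_mul hg.star
  have hgf_int : Integrable (fun ω => g ω * star (f ω)) μ := hg.integrable_mul hf.star
  have hgg_int : Integrable (fun ω => g ω * star (g ω)) μ := hg.integrable_mul hg.star
  simp only [meanPower, star_add, mul_add, add_mul]
  rw [integral_add (hff_int.fun_add hgf_int) (hfg_int.fun_add hgg_int),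
    integral_add hff_int hgf_int, integral_add hfg_int hgg_int, hfg, hgf, add_zero, zero_add]

theorem meanPower_sub_integral [IsProbabilityMeasure μ] (hf : MemLp f 2 μ) :
    meanPower (fun ω => f ω - ∫ x, f x ∂μ) μ =
      meanPower f μ - (∫ ω, f ω ∂μ) * star (∫ ω, f ω ∂μ) := by
  set m := ∫ ω, f ω ∂μ with hm
  have hf_int : Integrable f μ := hf.integrable one_le_two
  have h_orthogonal : ∫ ω, (f ω - m) * star m ∂μ = 0 := by
    rw [integral_mul_const, integral_sub hf_int (integrable_const m), ← hm]
    simp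
  have h_const : meanPower (fun _ : Ω => m) μ = m * star m := by simp [meanPower]
  have h_add := meanPower_add_of_integral_mul_star_eq_zero (hf.sub (memLp_const m))
    (memLp_const m) h_orthogonal
  simp only [Pi.sub_apply, sub_add_cancel] at h_add
  rw [h_add, h_const]
  exact (add_sub_cancel_right _ _).symm

theorem memLp_two_mul_of_indepFun (hfg : IndepFun f g μ) (hf : MemLp f 2 μ) (hg : MemLp g 2 μ) :
    MemLp (fun ω => f ω * g ω) 2 μ := by
  have h_sq : Measurable fun z : 𝕜 => ‖z‖ ^ 2 := by fun_prop
  rw [memLp_two_iff_integrable_sq_norm (hf.1.fun_mul hg.1)]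
  simp only [norm_mul, mul_pow]
  exact (hfg.comp h_sq h_sq).integrable_mul hf.norm.integrable_sq hg.norm.integrable_sq

theorem meanPower_mul_of_indepFun (hfg : IndepFun f g μ) (hf : AEStronglyMeasurable f μ)
    (hg : AEStronglyMeasurable g μ) :
    meanPower (fun ω => f ω * g ω) μ = meanPower f μ * meanPower g μ := by
  have h_mul_star : Measurable fun z : 𝕜 => z * star z := by fun_prop
  have h_mul := (hfg.comp h_mul_star h_mul_star).integral_fun_mul_eq_mul_integral
    (hf.mul hf.star) (hg.mul hg.star)
  refine Eq.trans ?_ h_mul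
  exact integral_congr_ae (.of_forall fun ω => by simp only [Function.comp_apply, star_mul']; ring)

theorem meanPower_mul_add_of_indepFun {a b s : Ω → 𝕜}
    (hs_indep : IndepFun s (fun ω => (a ω, b ω)) μ) (hs : MemLp s 2 μ) (ha : MemLp a 2 μ)
    (hb : MemLp b 2 μ) (hs_mean : ∫ ω, s ω ∂μ = 0) :
    meanPower (fun ω => a ω * s ω + b ω) μ = meanPower a μ * meanPower s μ + meanPower b μ := by
  have has : IndepFun a s μ := (hs_indep.comp measurable_id measurable_fst).symm
  have h_cross : ∫ ω, a ω * s ω * star (b ω) ∂μ = 0 := by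
    have h_indep : IndepFun s (fun ω => a ω * star (b ω)) μ :=
      hs_indep.comp measurable_id (show Measurable fun z : 𝕜 × 𝕜 => z.1 * star z.2 by fun_prop)
    have h_mul := h_indep.integral_fun_mul_eq_mul_integral hs.1 (ha.1.mul hb.1.star)
    rw [hs_mean, zero_mul] at h_mul
    rw [← h_mul]
    exact integral_congr_ae (.of_forall fun ω => by ring)
  rw [meanPower_add_of_integral_mul_star_eq_zero (memLp_two_mul_of_indepFun has ha hs) hb h_cross,
    meanPower_mul_of_indepFun has ha.1 hs.1]

end MeanPower

section CorrelationMatrix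

open Matrix

variable {Ω ι 𝕜 : Type*} [MeasurableSpace Ω] [RCLike 𝕜] {μ : Measure Ω} {X Y : Ω → ι → 𝕜}

/-- The (uncentred) correlation matrix `E[X Xᴴ]` of a random vector `X`, with entries
`E[Xᵢ conj(Xⱼ)]`. -/
noncomputable def correlationMatrix (X : Ω → ι → 𝕜) (μ : Measure Ω) : Matrix ι ι 𝕜 :=
  Matrix.of fun i j => ∫ ω, X ω i * star (X ω j) ∂μ

variable [Fintype ι]

theorem trace_mul_eq_card_of_mul_eq_one {κ α : Type*} [Fintype κ] [DecidableEq κ] [CommSemiring α]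
    {A : Matrix κ ι α} {B : Matrix ι κ α} (hAB : A * B = 1) :
    trace (B * A) = Fintype.card κ := by
  rw [trace_mul_comm, hAB, trace_one]

theorem norm_star_dotProduct_self (x : ι → 𝕜) : ‖star x ⬝ᵥ x‖ = ∑ i, ‖x i‖ ^ 2 := by
  have h_ofReal : star x ⬝ᵥ x = ((∑ i, ‖x i‖ ^ 2 : ℝ) : 𝕜) := by
    simp [dotProduct, RCLike.conj_mul]
  rw [h_ofReal, RCLike.norm_of_nonneg (by positivity)]

theorem memLp_two_star_dotProduct_self (hX : ∀ i, AEStronglyMeasurable (fun ω => X ω i) μ)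
    (hX4 : Integrable (fun ω => (∑ i, ‖X ω i‖ ^ 2) ^ 2) μ) :
    MemLp (fun ω => star (X ω) ⬝ᵥ X ω) 2 μ := by
  have h_meas : AEStronglyMeasurable (fun ω => star (X ω) ⬝ᵥ X ω) μ :=
    Finset.aestronglyMeasurable_fun_sum _ fun i _ => (hX i).star.mul (hX i)
  simpa only [memLp_two_iff_integrable_sq_norm h_meas, norm_star_dotProduct_self] using hX4

theorem meanPower_star_dotProduct_self (X : Ω → ι → 𝕜) (μ : Measure Ω) :
    meanPower (fun ω => star (X ω) ⬝ᵥ X ω) μ =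
      ((∫ ω, (∑ i, ‖X ω i‖ ^ 2) ^ 2 ∂μ : ℝ) : 𝕜) := by
  simp only [meanPower_eq_integral_norm_sq, norm_star_dotProduct_self]

theorem integral_star_dotProduct_self (hX : ∀ i, MemLp (fun ω => X ω i) 2 μ) :
    ∫ ω, star (X ω) ⬝ᵥ X ω ∂μ = trace (correlationMatrix X μ) := by
  simp only [dotProduct_comm (star (X _))]
  exact integral_finsetSum _ fun i _ => (hX i).integrable_mul (hX i).star

theorem star_trace_correlationMatrix (X : Ω → ι → 𝕜) (μ : Measure Ω) :
    star (trace (correlationMatrix X μ)) = trace (correlationMatrix X μ) := by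
  have h_diag (i : ι) :
      correlationMatrix X μ i i = ((∫ ω, ‖X ω i‖ ^ 2 ∂μ : ℝ) : 𝕜) :=
    meanPower_eq_integral_norm_sq (fun ω => X ω i) μ
  simp only [trace, diag, h_diag, star_sum, RCLike.star_def, RCLike.conj_ofReal]

theorem memLp_two_star_dotProduct_of_indepFun (hXY : IndepFun X Y μ)
    (hX : ∀ i, MemLp (fun ω => X ω i) 2 μ) (hY : ∀ i, MemLp (fun ω => Y ω i) 2 μ) :
    MemLp (fun ω => star (X ω) ⬝ᵥ Y ω) 2 μ := by
  refine memLp_finsetSum _ fun i _ => memLp_two_mul_of_indepFun ?_ (hX i).star (hY i)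
  exact hXY.comp (show Measurable fun x : ι → 𝕜 => star (x i) by fun_prop)
    (measurable_pi_apply i)

theorem meanPower_star_dotProduct_of_indepFun (hXY : IndepFun X Y μ)
    (hX : ∀ i, MemLp (fun ω => X ω i) 2 μ) (hY : ∀ i, MemLp (fun ω => Y ω i) 2 μ) :
    meanPower (fun ω => star (X ω) ⬝ᵥ Y ω) μ =
      trace (correlationMatrix X μ * correlationMatrix Y μ) := by
  have h_expand (ω : Ω) : (star (X ω) ⬝ᵥ Y ω) * star (star (X ω) ⬝ᵥ Y ω) =
      ∑ j, ∑ i, (X ω j * star (X ω i)) * (Y ω i * star (Y ω j)) := by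
    simp only [dotProduct, star_sum, Finset.sum_mul_sum, star_mul', Pi.star_apply, star_star]
    rw [Finset.sum_comm]
    exact Finset.sum_congr rfl fun j _ => Finset.sum_congr rfl fun i _ => by ring
  have h_outer (i j : ι) : Measurable fun x : ι → 𝕜 => x i * star (x j) := by fun_prop
  have h_indep (i j : ι) :
      IndepFun (fun ω => X ω j * star (X ω i)) (fun ω => Y ω i * star (Y ω j)) μ :=
    hXY.comp (h_outer j i) (h_outer i j)
  have hXX_int (i j : ι) : Integrable (fun ω => X ω i * star (X ω j)) μ :=
    (hX i).integrable_mul (hX j).star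
  have hYY_int (i j : ι) : Integrable (fun ω => Y ω i * star (Y ω j)) μ :=
    (hY i).integrable_mul (hY j).star
  have h_int (i j : ι) :
      Integrable (fun ω => (X ω j * star (X ω i)) * (Y ω i * star (Y ω j))) μ :=
    (h_indep i j).integrable_mul (hXX_int j i) (hYY_int i j)
  simp only [meanPower, h_expand, trace, diag, mul_apply, correlationMatrix, of_apply]
  rw [integral_finsetSum _ fun j _ => integrable_finsetSum _ fun i _ => h_int i j]
  refine Finset.sum_congr rfl fun j _ => ?_
  rw [integral_finsetSum _ fun i _ => h_int i j]
  exact Finset.sum_congr rfl fun i _ =>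
    (h_indep i j).integral_fun_mul_eq_mul_integral (hXX_int j i).1 (hYY_int i j).1

theorem integral_mul_star_star_dotProduct_eq_zero {Z : Ω → 𝕜}
    (hX_indep : IndepFun X (fun ω => (Z ω, Y ω)) μ) (hX : ∀ i, Integrable (fun ω => X ω i) μ)
    (hZ : MemLp Z 2 μ) (hY : ∀ i, MemLp (fun ω => Y ω i) 2 μ) (hX_mean : ∀ i, ∫ ω, X ω i ∂μ = 0) :
    ∫ ω, Z ω * star (star (X ω) ⬝ᵥ Y ω) ∂μ = 0 := by
  have h_expand (ω : Ω) :
      Z ω * star (star (X ω) ⬝ᵥ Y ω) = ∑ i, X ω i * (Z ω * star (Y ω i)) := by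
    simp only [dotProduct, star_sum, star_mul', Pi.star_apply, star_star, Finset.mul_sum,
      mul_left_comm]
  have h_indep (i : ι) : IndepFun (fun ω => X ω i) (fun ω => Z ω * star (Y ω i)) μ :=
    hX_indep.comp (measurable_pi_apply i)
      (show Measurable fun z : 𝕜 × (ι → 𝕜) => z.1 * star (z.2 i) by fun_prop)
  have hZY_int (i : ι) : Integrable (fun ω => Z ω * star (Y ω i)) μ :=
    hZ.integrable_mul (hY i).star
  have h_int (i : ι) : Integrable (fun ω => X ω i * (Z ω * star (Y ω i))) μ :=
    (h_indep i).integrable_mul (hX i) (hZY_int i)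
  simp only [h_expand]
  rw [integral_finsetSum _ fun i _ => h_int i]
  refine Finset.sum_eq_zero fun i _ => ?_
  rw [(h_indep i).integral_fun_mul_eq_mul_integral (hX i).1 (hZY_int i).1, hX_mean, zero_mul]

end CorrelationMatrix

section EffectiveNoise

open Matrix

variable {Ω ι 𝕜 : Type*} [MeasurableSpace Ω] [Fintype ι] [RCLike 𝕜] {P : Measure Ω}
  {h w n : Ω → ι → 𝕜}

theorem meanPower_star_dotProduct_self_sub_trace_add [IsProbabilityMeasure P]
    (hhw_indep : IndepFun h w P) (hh : ∀ i, MemLp (fun ω => h ω i) 2 P)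
    (hhh : MemLp (fun ω => star (h ω) ⬝ᵥ h ω) 2 P) (hw : ∀ i, MemLp (fun ω => w ω i) 2 P)
    (hw_mean : ∀ i, ∫ ω, w ω i ∂P = 0) :
    meanPower
        (fun ω => star (h ω) ⬝ᵥ h ω - trace (correlationMatrix h P) + star (w ω) ⬝ᵥ h ω) P =
      meanPower (fun ω => star (h ω) ⬝ᵥ h ω) P
        - trace (correlationMatrix h P) ^ 2
        + trace (correlationMatrix w P * correlationMatrix h P) := by
  have h_real := star_trace_correlationMatrix h P
  rw [← integral_star_dotProduct_self hh] at h_real ⊢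
  set m := ∫ ω, star (h ω) ⬝ᵥ h ω ∂P
  have h_centred : MemLp (fun ω => star (h ω) ⬝ᵥ h ω - m) 2 P := hhh.sub (memLp_const m)
  have h_indep : IndepFun w (fun ω => (star (h ω) ⬝ᵥ h ω - m, h ω)) P :=
    hhw_indep.symm.comp measurable_id
      (show Measurable fun x : ι → 𝕜 => (star x ⬝ᵥ x - m, x) by unfold dotProduct; fun_prop)
  have h_cross := integral_mul_star_star_dotProduct_eq_zero h_indep
    (fun i => (hw i).integrable one_le_two) h_centred hh hw_mean
  rw [meanPower_add_of_integral_mul_star_eq_zero h_centred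
      (memLp_two_star_dotProduct_of_indepFun hhw_indep.symm hw hh) h_cross,
    meanPower_sub_integral hhh, h_real, ← sq,
    meanPower_star_dotProduct_of_indepFun hhw_indep.symm hw hh]

theorem meanPower_star_add_dotProduct [IsFiniteMeasure P]
    (hh_indep : IndepFun h (fun ω => (w ω, n ω)) P) (hwn_indep : IndepFun w n P)
    (hh : ∀ i, MemLp (fun ω => h ω i) 2 P) (hw : ∀ i, MemLp (fun ω => w ω i) 2 P)
    (hn : ∀ i, MemLp (fun ω => n ω i) 2 P) (hh_mean : ∀ i, ∫ ω, h ω i ∂P = 0) :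
    meanPower (fun ω => star (h ω + w ω) ⬝ᵥ n ω) P =
      trace ((correlationMatrix h P + correlationMatrix w P) * correlationMatrix n P) := by
  have hhn_indep : IndepFun h n P := hh_indep.comp measurable_id measurable_snd
  have h_indep : IndepFun h (fun ω => (star (w ω) ⬝ᵥ n ω, n ω)) P :=
    hh_indep.comp measurable_id (show Measurable fun z : (ι → 𝕜) × (ι → 𝕜) =>
      (star z.1 ⬝ᵥ z.2, z.2) by unfold dotProduct; fun_prop)
  have hwn := memLp_two_star_dotProduct_of_indepFun hwn_indep hw hn
  have h_cross := integral_mul_star_star_dotProduct_eq_zero h_indep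
    (fun i => (hh i).integrable one_le_two) hwn hn hh_mean
  simp only [star_add, add_dotProduct, add_mul, trace_add, add_comm (star (h _) ⬝ᵥ n _)]
  rw [meanPower_add_of_integral_mul_star_eq_zero hwn
      (memLp_two_star_dotProduct_of_indepFun hhn_indep hh hn) h_cross,
    meanPower_star_dotProduct_of_indepFun hwn_indep hw hn,
    meanPower_star_dotProduct_of_indepFun hhn_indep hh hn, add_comm]

theorem stmt_15_general [IsProbabilityMeasure P] (c : 𝕜) {s : Ω → 𝕜}
    (hs_indep : IndepFun s (fun ω => (h ω, w ω, n ω)) P)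
    (hh_indep : IndepFun h (fun ω => (w ω, n ω)) P) (hwn_indep : IndepFun w n P)
    (hs : MemLp s 2 P) (hh : ∀ i, MemLp (fun ω => h ω i) 2 P)
    (hhh : MemLp (fun ω => star (h ω) ⬝ᵥ h ω) 2 P) (hw : ∀ i, MemLp (fun ω => w ω i) 2 P)
    (hn : ∀ i, MemLp (fun ω => n ω i) 2 P) (hs_mean : ∫ ω, s ω ∂P = 0)
    (hh_mean : ∀ i, ∫ ω, h ω i ∂P = 0) (hw_mean : ∀ i, ∫ ω, w ω i ∂P = 0) :
    meanPower (fun ω =>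
        c * (star (h ω) ⬝ᵥ h ω + star (w ω) ⬝ᵥ h ω - trace (correlationMatrix h P)) * s ω
          + star (h ω + w ω) ⬝ᵥ n ω) P =
      c * star c * meanPower s P *
          (meanPower (fun ω => star (h ω) ⬝ᵥ h ω) P
            - trace (correlationMatrix h P) ^ 2
            + trace (correlationMatrix w P * correlationMatrix h P))
        + trace ((correlationMatrix h P + correlationMatrix w P) * correlationMatrix n P) := by
  set m := trace (correlationMatrix h P)
  have hhw_indep : IndepFun h w P := hh_indep.comp measurable_id measurable_fst
  have hhn_indep : IndepFun h n P := hh_indep.comp measurable_id measurable_snd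
  have h_gain : MemLp (fun ω => star (h ω) ⬝ᵥ h ω - m + star (w ω) ⬝ᵥ h ω) 2 P :=
    (hhh.sub (memLp_const m)).add (memLp_two_star_dotProduct_of_indepFun hhw_indep.symm hw hh)
  have h_noise : MemLp (fun ω => star (h ω + w ω) ⬝ᵥ n ω) 2 P := by
    simp only [star_add, add_dotProduct]
    exact (memLp_two_star_dotProduct_of_indepFun hhn_indep hh hn).add
      (memLp_two_star_dotProduct_of_indepFun hwn_indep hw hn)
  have h_indep : IndepFun s (fun ω => (c * (star (h ω) ⬝ᵥ h ω - m + star (w ω) ⬝ᵥ h ω),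
      star (h ω + w ω) ⬝ᵥ n ω)) P :=
    hs_indep.comp measurable_id (show Measurable fun z : (ι → 𝕜) × (ι → 𝕜) × (ι → 𝕜) =>
      (c * (star z.1 ⬝ᵥ z.1 - m + star z.2.1 ⬝ᵥ z.1), star (z.1 + z.2.1) ⬝ᵥ z.2.2) by
        unfold dotProduct; fun_prop)
  simp only [add_sub_right_comm]
  rw [meanPower_mul_add_of_indepFun h_indep hs (h_gain.const_mul c) h_noise hs_mean,
    meanPower_const_mul, meanPower_star_dotProduct_self_sub_trace_add hhw_indep hh hhh hw hw_mean,
    meanPower_star_add_dotProduct hh_indep hwn_indep hh hw hn hh_mean, mul_right_comm]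

end EffectiveNoise

/-- The effective noise power in the SISO channel obtained after maximum-ratio
combining with the RS-LS channel estimate (equation (23), Appendix A):
`E[|υ|²] = ρ·β²·tr(R²) + M·β + (1/τ_p)·(M·β + r/ρ)`. -/
theorem stmt_15 {Ω : Type*} [MeasurableSpace Ω] (P : Measure Ω) [IsProbabilityMeasure P]
    (M r : ℕ) (hr : 1 ≤ r) (hrM : r ≤ M)
    (ρ β τp : ℝ) (hρ : 0 < ρ) (hβ : 0 < β) (hτp : 0 < τp)
    (R : Matrix (Fin M) (Fin M) ℂ) (htrR : Matrix.trace R = (M : ℂ))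
    (U₁ : Matrix (Fin M) (Fin r) ℂ)
    (hU : U₁.conjTranspose * U₁ = 1)
    (hUR : (U₁ * U₁.conjTranspose) * R = R)
    (s : Ω → ℂ) (h w n : Ω → Fin M → ℂ)
    -- mutual independence of s, h, w, n
    (hs_ind : IndepFun s (fun ω => (h ω, w ω, n ω)) P)
    (hh_ind : IndepFun h (fun ω => (w ω, n ω)) P)
    (hwn_ind : IndepFun w n P)
    -- moments of the data symbol
    (hEs : ∫ ω, s ω ∂P = 0)
    (hEs2 : ∫ ω, ‖s ω‖ ^ 2 ∂P = 1)
    -- moments of the channel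
    (hEh0 : ∀ i, ∫ ω, h ω i ∂P = 0)
    (hEh : ∀ i j, ∫ ω, h ω i * star (h ω j) ∂P = (β : ℂ) * R i j)
    (hEh4 : ((∫ ω, (∑ i, ‖h ω i‖ ^ 2) ^ 2 ∂P : ℝ) : ℂ) =
      (β : ℂ) ^ 2 * (Matrix.trace R) ^ 2 + (β : ℂ) ^ 2 * Matrix.trace (R * R))
    -- moments of the RS-LS estimation error
    (hEw0 : ∀ i, ∫ ω, w ω i ∂P = 0)
    (hEw : ∀ i j, ∫ ω, w ω i * star (w ω j) ∂P =
      (U₁ * U₁.conjTranspose) i j / ((ρ : ℂ) * (τp : ℂ)))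
    -- moments of the receiver noise
    (hEn0 : ∀ i, ∫ ω, n ω i ∂P = 0)
    (hEn : ∀ i j, ∫ ω, n ω i * star (n ω j) ∂P = if i = j then 1 else 0)
    -- the effective noise
    (υ : Ω → ℂ)
    (hυ : ∀ ω, υ ω =
      (Real.sqrt ρ : ℂ) *
        ((∑ i, star (h ω i) * h ω i) + (∑ i, star (w ω i) * h ω i)
          - (M : ℂ) * (β : ℂ)) * s ω
      + ∑ i, star (h ω i + w ω i) * n ω i)
    -- integrability of all the random variables appearing in the computation
    (hs_int : Integrable s P)
    (hs2_int : Integrable (fun ω => ‖s ω‖ ^ 2) P)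
    (hh_int : ∀ i, Integrable (fun ω => h ω i) P)
    (hhh_int : ∀ i j, Integrable (fun ω => h ω i * star (h ω j)) P)
    (hh4_int : Integrable (fun ω => (∑ i, ‖h ω i‖ ^ 2) ^ 2) P)
    (hw_int : ∀ i, Integrable (fun ω => w ω i) P)
    (hww_int : ∀ i j, Integrable (fun ω => w ω i * star (w ω j)) P)
    (hn_int : ∀ i, Integrable (fun ω => n ω i) P)
    (hnn_int : ∀ i j, Integrable (fun ω => n ω i * star (n ω j)) P)
    (hυ2_int : Integrable (fun ω => υ ω * star (υ ω)) P) :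
    ∫ ω, υ ω * star (υ ω) ∂P =
      (ρ : ℂ) * (β : ℂ) ^ 2 * Matrix.trace (R * R) + (M : ℂ) * (β : ℂ)
        + (1 / (τp : ℂ)) * ((M : ℂ) * (β : ℂ) + (r : ℂ) / (ρ : ℂ)) := by
  have hρ_ne : (ρ : ℂ) ≠ 0 := Complex.ofReal_ne_zero.2 hρ.ne'
  have hτp_ne : (τp : ℂ) ≠ 0 := Complex.ofReal_ne_zero.2 hτp.ne'
  have hCh : correlationMatrix h P = (β : ℂ) • R := Matrix.ext hEh
  have hCw : correlationMatrix w P = ((ρ : ℂ) * τp)⁻¹ • (U₁ * U₁.conjTranspose) :=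
    Matrix.ext fun i j => (hEw i j).trans (div_eq_inv_mul _ _)
  have hCn : correlationMatrix n P = 1 :=
    Matrix.ext fun i j => (hEn i j).trans Matrix.one_apply.symm
  have hs_power : meanPower s P = 1 := by simp [meanPower_eq_integral_norm_sq, hEs2]
  have hhh_power := (meanPower_star_dotProduct_self h P).trans hEh4
  have hsqrt : (√ρ : ℂ) * star (√ρ : ℂ) = ρ := by
    simp [← Complex.ofReal_mul, Real.mul_self_sqrt hρ.le]
  have hυ_power := stmt_15_general (√ρ : ℂ) hs_ind hh_ind hwn_ind
    ((memLp_two_iff_integrable_sq_norm hs_int.1).2 hs2_int)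
    (fun i => memLp_two_of_integrable_mul_star (hh_int i).1 (hhh_int i i))
    (memLp_two_star_dotProduct_self (fun i => (hh_int i).1) hh4_int)
    (fun i => memLp_two_of_integrable_mul_star (hw_int i).1 (hww_int i i))
    (fun i => memLp_two_of_integrable_mul_star (hn_int i).1 (hnn_int i i)) hEs hEh0 hEw0
  rw [hsqrt, hs_power, hhh_power, hCh, hCw, hCn] at hυ_power
  simp only [mul_one, smul_mul_smul_comm, hUR, Matrix.trace_add, Matrix.trace_smul, smul_eq_mul,
    htrR, trace_mul_eq_card_of_mul_eq_one hU, Fintype.card_fin,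
    mul_comm (β : ℂ) (M : ℂ)] at hυ_power
  rw [funext hυ]
  refine hυ_power.trans ?_
  field_simp
  ring
end
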